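/- arXiv:1704.03761 — 2 statements merged into one kernel-verified Lean document; each statement's English description precedes it below -/
import Mathlib

section
/- Let C be a nonzero cyclic code in 𝔽_q(n), α ∈ U_n, 𝔹 a set of ds-bounds, g the generating polynomial of C and e the idempotent generator of C. Then: (1) Δ_𝔹(M(φ_{α,g})) = Δ_𝔹(M(φ_{α,e})) ≤ Δ_𝔹(M(φ_{α,c})) for all nonzero c ∈ C; (2) for every nonzero c ∈ C, ω(c) ≥ Δ_𝔹(M(φ_{α,c})); and consequently (3) Δ_𝔹(M(φ_{α,g})) = Δ_𝔹(M(φ_{α,e})) = min{Δ_𝔹(M(φ_{α,c})) : 0 ≠ c ∈ C} ≤ d(C). -/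
/-!
The discrete Fourier transform at a primitive `n`-th root of unity turns cyclic convolution into
the pointwise product (`dft1_conv1`) and is injective (`eq_zero_of_dft1_eq_zero`).  Hence every
codeword `c = u * g` has its transform supported inside the support of the transform of `g`, and
the transforms of `g` and `e`, which are multiples of each other, have the same support.  As a
ds-bound is monotone in the set of zeros, `Δ` can only grow when the support shrinks
(`DeltaV_mono`).

For the weight bound (`optB_le_wt`), a nonzero word `c` lies in the cyclic code of all words whose
transform vanishes wherever that of `c` does; the defining set of that code contains the zeros of
the transform of `c`, so every ds-bound of these zeros is at most the minimum distance of the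
code, hence at most `wt c`.  Ds-bounds refer to primitive roots in the algebraic closure of `F`,
so the root `α ∈ L` is first moved there by an `F`-embedding of `F(α)`
(`exists_root_algebraicClosure`).  The weight bound also shows that the supremum over a
possibly infinite set of ds-bounds is a genuine one.
-/

open scoped Classical
open Polynomial

noncomputable section

namespace DS

/-- Hamming weight of a vector. -/
def wt {ι R : Type} [Fintype ι] [Zero R] (v : ι → R) : ℕ :=
  (Finset.univ.filter fun i => v i ≠ 0).card

/-- Minimum (Hamming) distance of a set of codewords. -/
def minDist {ι R : Type} [Fintype ι] [Zero R] (C : Set (ι → R)) : ℕ :=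
  sInf (wt '' (C \ {0}))

/-! ### Univariate (cyclic) setting -/

/-- cyclic shift = multiplication by `X` in `F[X]/(X^n-1)` -/
def shiftOne {n : ℕ} {R : Type} (v : ZMod n → R) : ZMod n → R := fun i => v (i - 1)

/-- A cyclic code: an ideal of `F[X]/(X^n-1)`, viewed through coefficient vectors. -/
def IsCyclicCode {F : Type} [Field F] {n : ℕ} (C : Set (ZMod n → F)) : Prop :=
  (0 : ZMod n → F) ∈ C ∧ (∀ u ∈ C, ∀ v ∈ C, u + v ∈ C) ∧
    (∀ (a : F), ∀ v ∈ C, a • v ∈ C) ∧ (∀ v ∈ C, shiftOne v ∈ C)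

/-- Evaluation of a (coefficient vector of a) polynomial of `L(n)` at `β`. -/
def evalV {n : ℕ} [NeZero n] {R : Type} [CommRing R] (v : ZMod n → R) (β : R) : R :=
  ∑ i : ZMod n, v i * β ^ i.val

/-- Evaluation of an `F`-polynomial at a point of an extension `L`. -/
def evalVF {F L : Type} [Field F] [CommRing L] [Algebra F L] {n : ℕ} [NeZero n]
    (v : ZMod n → F) (β : L) : L :=
  ∑ i : ZMod n, algebraMap F L (v i) * β ^ i.val

/-- Defining set of a cyclic code with respect to `α`. -/
def defSet1 {F L : Type} [Field F] [CommRing L] [Algebra F L] {n : ℕ} [NeZero n]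
    (α : L) (C : Set (ZMod n → F)) : Set (ZMod n) :=
  {i | ∀ v ∈ C, evalVF v (α ^ i.val) = 0}

/-- Discrete Fourier transform of an `F`-codeword with respect to `α`. -/
def dft1 {F L : Type} [Field F] [CommRing L] [Algebra F L] {n : ℕ} [NeZero n]
    (α : L) (c : ZMod n → F) : ZMod n → L :=
  fun j => evalVF c (α ^ j.val)

/-- Inverse discrete Fourier transform. -/
def invDFT1 {L : Type} [Field L] {n : ℕ} [NeZero n] (α : L) (g : ZMod n → L) :
    ZMod n → L :=
  fun j => (n : L)⁻¹ * evalV g (α⁻¹ ^ j.val)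

/-- The set `Z̄(v)` of `n`-th roots of unity at which `v` does not vanish. -/
def nonzeros1 {L : Type} [CommRing L] {n : ℕ} [NeZero n] (v : ZMod n → L) : Set L :=
  {β | β ^ n = 1 ∧ evalV v β ≠ 0}

/-- Multiplication (cyclic convolution) in `R[X]/(X^n-1)`. -/
def conv1 {n : ℕ} [NeZero n] {R : Type} [CommRing R] (u v : ZMod n → R) : ZMod n → R :=
  fun i => ∑ j : ZMod n, u j * v (i - j)

/-- Coefficient vector of the reduction of `X^h·v` modulo `X^n-1`. -/
def shiftBy {n : ℕ} {R : Type} (h : ℕ) (v : ZMod n → R) : ZMod n → R :=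
  fun i => v (i - (h : ZMod n))

/-- The polynomial (of degree `< n`) with coefficient vector `v`. -/
def toPoly {L : Type} [CommRing L] {n : ℕ} [NeZero n] (v : ZMod n → L) : Polynomial L :=
  ∑ i : ZMod n, Polynomial.C (v i) * Polynomial.X ^ i.val

/-! ### ds-bounds -/

/-- A defining-set bound (ds-bound) for the minimum distance of cyclic codes over `F`. -/
structure DSBound (F : Type) [Field F] [Fintype F] where
  rel : ∀ n : ℕ, Set (ZMod n) → ℕ → Prop
  bound : ∀ (n : ℕ) [NeZero n] (C : Set (ZMod n → F)), IsCyclicCode C → C ≠ {0} →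
    ∀ α : AlgebraicClosure F, IsPrimitiveRoot α n →
      ∀ (N : Set (ZMod n)) (b : ℕ), N ⊆ defSet1 α C → rel n N b → 1 ≤ b ∧ b ≤ minDist C
  mono : ∀ (n : ℕ) (N M : Set (ZMod n)), N ⊆ M → ∀ b, rel n N b → rel n M b
  one' : ∀ (n : ℕ) (N : Set (ZMod n)), rel n N 1
  bdd : ∀ (n : ℕ) (N : Set (ZMod n)), BddAbove {b | rel n N b}

/-- The optimal ds-bound `δ̄` associated to a ds-bound `δ`. -/
def optB {F : Type} [Field F] [Fintype F] (δ : DSBound F) (n : ℕ) (N : Set (ZMod n)) : ℕ :=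
  sSup {b | δ.rel n N b}

/-- Apparent distance of a vector with respect to a set `B` of ds-bounds. -/
def DeltaV {F : Type} [Field F] [Fintype F] (B : Set (DSBound F)) {L : Type} [Zero L]
    {n : ℕ} (v : ZMod n → L) : ℕ :=
  if v = 0 then 0 else sSup ((fun δ => optB δ n {i | v i ≠ 0}ᶜ) '' B)

/-- `(B,α)`-apparent distance of a cyclic code. -/
def DeltaCodeAt1 {F : Type} [Field F] [Fintype F] {L : Type} [Field L] [Algebra F L]
    {n : ℕ} [NeZero n] (B : Set (DSBound F)) (α : L) (C : Set (ZMod n → F)) : ℕ :=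
  sInf {m | ∃ c ∈ C, c ≠ 0 ∧ m = DeltaV B (dft1 α c)}

/-! ### Hypermatrices (several variables) -/

/-- Hypercolumn `H_M(j,k)` of a hypermatrix. -/
def hyperCol {L : Type} {s : ℕ} {r : Fin (s + 1) → ℕ} (M : (∀ i, ZMod (r i)) → L)
    (j : Fin (s + 1)) (k : ZMod (r j)) : (∀ i : Fin s, ZMod (r (j.succAbove i))) → L :=
  fun x => M (j.insertNth k x)

/-- The `B`-apparent distance of an `s`-dimensional hypermatrix. -/
def DeltaH {F : Type} [Field F] [Fintype F] {L : Type} [Zero L] (B : Set (DSBound F)) :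
    (s : ℕ) → (r : Fin s → ℕ) → ((∀ i, ZMod (r i)) → L) → ℕ
  | 0, _, M => if M = 0 then 0 else 1
  | s + 1, r, M =>
    if M = 0 then 0
    else
      sSup (Set.range fun j : Fin (s + 1) =>
        sSup ((fun δ => optB δ (r j) {k : ZMod (r j) | hyperCol M j k ≠ 0}ᶜ) '' B) *
        sSup ((fun k : ZMod (r j) =>
            DeltaH B s (fun i => r (j.succAbove i)) (hyperCol M j k)) ''
          {k : ZMod (r j) | hyperCol M j k ≠ 0}))

/-- `supp_j(M)`. -/
def suppj {L : Type} [Zero L] {s : ℕ} {r : Fin (s + 1) → ℕ}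
    (M : (∀ i, ZMod (r i)) → L) (j : Fin (s + 1)) : Set (ZMod (r j)) :=
  {k | hyperCol M j k ≠ 0}

/-- `ω_j(M)`. -/
def omegaj {F : Type} [Field F] [Fintype F] {L : Type} [Zero L] {s : ℕ}
    {r : Fin (s + 1) → ℕ} (B : Set (DSBound F)) (M : (∀ i, ZMod (r i)) → L)
    (j : Fin (s + 1)) : ℕ :=
  sSup ((fun δ => optB δ (r j) (suppj M j)ᶜ) '' B)

/-- `ε_j(M)`. -/
def epsj {F : Type} [Field F] [Fintype F] {L : Type} [Zero L] {s : ℕ}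
    {r : Fin (s + 1) → ℕ} (B : Set (DSBound F)) (M : (∀ i, ZMod (r i)) → L)
    (j : Fin (s + 1)) : ℕ :=
  sSup ((fun k => DeltaH B s (fun i => r (j.succAbove i)) (hyperCol M j k)) '' suppj M j)

/-- `Δ_j(M) = ω_j(M)·ε_j(M)`. -/
def Deltaj {F : Type} [Field F] [Fintype F] {L : Type} [Zero L] {s : ℕ}
    {r : Fin (s + 1) → ℕ} (B : Set (DSBound F)) (M : (∀ i, ZMod (r i)) → L)
    (j : Fin (s + 1)) : ℕ :=
  omegaj B M j * epsj B M j

/-! ### Multivariate polynomials, DFT, abelian codes -/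

/-- Evaluation of a multivariate polynomial (given by its coefficient hypermatrix). -/
def mEval {L : Type} [CommRing L] {s : ℕ} {r : Fin s → ℕ} [∀ i, NeZero (r i)]
    (f : (∀ i, ZMod (r i)) → L) (β : Fin s → L) : L :=
  ∑ j : ∀ i, ZMod (r i), f j * ∏ i, β i ^ (j i).val

/-- Multivariate discrete Fourier transform of an `F`-codeword. -/
def mDFT {F L : Type} [Field F] [CommRing L] [Algebra F L] {s : ℕ} {r : Fin s → ℕ}
    [∀ i, NeZero (r i)] (α : Fin s → L) (c : (∀ i, ZMod (r i)) → F) :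
    (∀ i, ZMod (r i)) → L :=
  fun j => ∑ k : ∀ i, ZMod (r i), algebraMap F L (c k) * ∏ i, (α i ^ (j i).val) ^ (k i).val

/-- Multivariate inverse discrete Fourier transform. -/
def mInvDFT {L : Type} [Field L] {s : ℕ} {r : Fin s → ℕ} [∀ i, NeZero (r i)]
    (α : Fin s → L) (g : (∀ i, ZMod (r i)) → L) : (∀ i, ZMod (r i)) → L :=
  fun j => (∏ i, (r i : L))⁻¹ *
    ∑ k : ∀ i, ZMod (r i), g k * ∏ i, ((α i)⁻¹ ^ (j i).val) ^ (k i).val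

/-- `Z̄(f)`: the points of `R` (products of roots of unity) where `f` does not vanish. -/
def mNonzeros {L : Type} [CommRing L] {s : ℕ} {r : Fin s → ℕ} [∀ i, NeZero (r i)]
    (f : (∀ i, ZMod (r i)) → L) : Set (Fin s → L) :=
  {β | (∀ i, β i ^ r i = 1) ∧ mEval f β ≠ 0}

/-- Multiplication by `X_t` in `F(r_1,…,r_s)`. -/
def mShift {s : ℕ} {r : Fin s → ℕ} {R : Type} (t : Fin s) (v : (∀ i, ZMod (r i)) → R) :
    (∀ i, ZMod (r i)) → R :=
  fun j => v (fun i => if i = t then j i - 1 else j i)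

/-- An abelian code: an ideal of `F[X_1,…,X_s]/(X_i^{r_i}-1)`. -/
def IsAbelianCode {F : Type} [Field F] {s : ℕ} {r : Fin s → ℕ}
    (C : Set ((∀ i, ZMod (r i)) → F)) : Prop :=
  (0 : (∀ i, ZMod (r i)) → F) ∈ C ∧ (∀ u ∈ C, ∀ v ∈ C, u + v ∈ C) ∧
    (∀ (a : F), ∀ v ∈ C, a • v ∈ C) ∧ (∀ t : Fin s, ∀ v ∈ C, mShift t v ∈ C)

/-- Multiplication (multivariate cyclic convolution) in `R(r_1,…,r_s)`. -/
def mConv {s : ℕ} {r : Fin s → ℕ} [∀ i, NeZero (r i)] {R : Type} [CommRing R]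
    (u v : (∀ i, ZMod (r i)) → R) : (∀ i, ZMod (r i)) → R :=
  fun j => ∑ k : ∀ i, ZMod (r i), u k * v (fun i => j i - k i)

/-- `(B,ᾱ)`-apparent distance of an abelian code. -/
def DeltaCodeAt {F : Type} [Field F] [Fintype F] {L : Type} [Field L] [Algebra F L]
    {s : ℕ} {r : Fin s → ℕ} [∀ i, NeZero (r i)] (B : Set (DSBound F)) (α : Fin s → L)
    (C : Set ((∀ i, ZMod (r i)) → F)) : ℕ :=
  sInf {m | ∃ c ∈ C, c ≠ 0 ∧ m = DeltaH B s r (mDFT α c)}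

/-- `B`-apparent distance of an abelian code. -/
def DeltaCode {F : Type} [Field F] [Fintype F] (L : Type) [Field L] [Algebra F L]
    {s : ℕ} {r : Fin s → ℕ} [∀ i, NeZero (r i)] (B : Set (DSBound F))
    (C : Set ((∀ i, ZMod (r i)) → F)) : ℕ :=
  sSup {m | ∃ α : Fin s → L, (∀ i, IsPrimitiveRoot (α i) (r i)) ∧ m = DeltaCodeAt B α C}

/-! ### q-orbits, afforded hypermatrices, B-mad -/

/-- The `q`-orbit of a tuple of indices. -/
def qOrbit (q : ℕ) {s : ℕ} {r : Fin s → ℕ} (a : ∀ i, ZMod (r i)) :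
    Set (∀ i, ZMod (r i)) :=
  {x | ∃ t : ℕ, x = fun i => (q : ZMod (r i)) ^ t * a i}

/-- `D` is a union of `q`-orbits. -/
def IsUnionOfQOrbits (q : ℕ) {s : ℕ} {r : Fin s → ℕ} (D : Set (∀ i, ZMod (r i))) : Prop :=
  ∀ a ∈ D, qOrbit q a ⊆ D

/-- The hypermatrix afforded by `D` (entry `0` on `D`, entry `1` outside `D`). -/
def afforded {L : Type} [Zero L] [One L] {s : ℕ} {r : Fin s → ℕ}
    (D : Set (∀ i, ZMod (r i))) : (∀ i, ZMod (r i)) → L :=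
  fun p => if p ∈ D then 0 else 1

/-- The minimum `B`-apparent distance `B-mad(M)` of a hypermatrix. -/
def Bmad {F : Type} [Field F] [Fintype F] {L : Type} [Zero L] {s : ℕ} {r : Fin s → ℕ}
    (B : Set (DSBound F)) (q : ℕ) (M : (∀ i, ZMod (r i)) → L) : ℕ :=
  sInf {m | ∃ P : (∀ i, ZMod (r i)) → L, P ≠ 0 ∧ IsUnionOfQOrbits q {p | P p ≠ 0} ∧
    {p | P p ≠ 0} ⊆ {p | M p ≠ 0} ∧ m = DeltaH B s r P}

end DS
/-! ### Two-variable setting -/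

namespace DS2
open DS

variable {r₁ r₂ : ℕ}

/-- Row `H_M(1,k)` of a matrix, i.e. the coefficient vector of `g_{1,k}`. -/
def row {L : Type} (M : ZMod r₁ × ZMod r₂ → L) (k : ZMod r₁) : ZMod r₂ → L :=
  fun j => M (k, j)

/-- Column `H_M(2,k)` of a matrix, i.e. the coefficient vector of `g_{2,k}`. -/
def col {L : Type} (M : ZMod r₁ × ZMod r₂ → L) (k : ZMod r₂) : ZMod r₁ → L :=
  fun i => M (i, k)

/-- Row support `supp_1(M)`. -/
def supp1 {L : Type} [Zero L] (M : ZMod r₁ × ZMod r₂ → L) : Set (ZMod r₁) :=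
  {k | row M k ≠ 0}

/-- Column support `supp_2(M)`. -/
def supp2 {L : Type} [Zero L] (M : ZMod r₁ × ZMod r₂ → L) : Set (ZMod r₂) :=
  {k | col M k ≠ 0}

variable {F : Type} [Field F] [Fintype F]

def omega1 {L : Type} [Zero L] (B : Set (DSBound F)) (M : ZMod r₁ × ZMod r₂ → L) : ℕ :=
  sSup ((fun δ => optB δ r₁ (supp1 M)ᶜ) '' B)

def omega2 {L : Type} [Zero L] (B : Set (DSBound F)) (M : ZMod r₁ × ZMod r₂ → L) : ℕ :=
  sSup ((fun δ => optB δ r₂ (supp2 M)ᶜ) '' B)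

def eps1 {L : Type} [Zero L] (B : Set (DSBound F)) (M : ZMod r₁ × ZMod r₂ → L) : ℕ :=
  sSup ((fun k => DeltaV B (row M k)) '' supp1 M)

def eps2 {L : Type} [Zero L] (B : Set (DSBound F)) (M : ZMod r₁ × ZMod r₂ → L) : ℕ :=
  sSup ((fun k => DeltaV B (col M k)) '' supp2 M)

/-- `B`-apparent distance of a two-variable matrix. -/
def Delta2 {L : Type} [Zero L] (B : Set (DSBound F)) (M : ZMod r₁ × ZMod r₂ → L) : ℕ :=
  if M = 0 then 0 else max (omega1 B M * eps1 B M) (omega2 B M * eps2 B M)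

/-! ### the BCH ds-bound, concretely -/

/-- `N` contains `a-1` consecutive integers modulo `n`. -/
def HasConsecutive {n : ℕ} (N : Set (ZMod n)) (a : ℕ) : Prop :=
  ∃ i0 : ZMod n, ∀ t : ℕ, t < a - 1 → i0 + (t : ZMod n) ∈ N

/-- The BCH ds-bound relation `(N,a) ∈ (δ_BCH)_n`. -/
def bchRel {n : ℕ} (N : Set (ZMod n)) (a : ℕ) : Prop :=
  a = 1 ∨ (2 ≤ a ∧ HasConsecutive N a)

/-- The optimal BCH ds-bound `δ̄_BCH`. -/
def bchOpt (n : ℕ) (N : Set (ZMod n)) : ℕ := sSup {a | bchRel N a}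

/-- BCH apparent distance of a vector. -/
def bchV {L : Type} [Zero L] {n : ℕ} (v : ZMod n → L) : ℕ :=
  if v = 0 then 0 else bchOpt n {i | v i ≠ 0}ᶜ

def bchOmega1 {L : Type} [Zero L] (M : ZMod r₁ × ZMod r₂ → L) : ℕ :=
  bchOpt r₁ (supp1 M)ᶜ

def bchOmega2 {L : Type} [Zero L] (M : ZMod r₁ × ZMod r₂ → L) : ℕ :=
  bchOpt r₂ (supp2 M)ᶜ

def bchEps1 {L : Type} [Zero L] (M : ZMod r₁ × ZMod r₂ → L) : ℕ :=
  sSup ((fun k => bchV (row M k)) '' supp1 M)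

def bchEps2 {L : Type} [Zero L] (M : ZMod r₁ × ZMod r₂ → L) : ℕ :=
  sSup ((fun k => bchV (col M k)) '' supp2 M)

/-- `Δ_1(M)` for the BCH bound. -/
def bchD1 {L : Type} [Zero L] (M : ZMod r₁ × ZMod r₂ → L) : ℕ := bchOmega1 M * bchEps1 M

/-- `Δ_2(M)` for the BCH bound. -/
def bchD2 {L : Type} [Zero L] (M : ZMod r₁ × ZMod r₂ → L) : ℕ := bchOmega2 M * bchEps2 M

/-- BCH apparent distance of a two-variable matrix. -/
def bchDelta {L : Type} [Zero L] (M : ZMod r₁ × ZMod r₂ → L) : ℕ :=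
  if M = 0 then 0 else max (bchD1 M) (bchD2 M)

/-! ### bivariate polynomials, DFT, codes -/

/-- Evaluation of a bivariate polynomial at `(u,v)`. -/
def eval2 {L : Type} [CommRing L] [NeZero r₁] [NeZero r₂] (g : ZMod r₁ × ZMod r₂ → L)
    (u v : L) : L :=
  ∑ p : ZMod r₁ × ZMod r₂, g p * u ^ p.1.val * v ^ p.2.val

/-- Bivariate DFT of an `F`-codeword. -/
def dft2 {F L : Type} [Field F] [CommRing L] [Algebra F L] [NeZero r₁] [NeZero r₂]
    (α₁ α₂ : L) (c : ZMod r₁ × ZMod r₂ → F) : ZMod r₁ × ZMod r₂ → L :=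
  fun j => ∑ p : ZMod r₁ × ZMod r₂,
    algebraMap F L (c p) * (α₁ ^ j.1.val) ^ p.1.val * (α₂ ^ j.2.val) ^ p.2.val

/-- Bivariate inverse DFT. -/
def invDFT2 {L : Type} [Field L] [NeZero r₁] [NeZero r₂] (α₁ α₂ : L)
    (g : ZMod r₁ × ZMod r₂ → L) : ZMod r₁ × ZMod r₂ → L :=
  fun j => ((r₁ : L) * (r₂ : L))⁻¹ * eval2 g (α₁⁻¹ ^ j.1.val) (α₂⁻¹ ^ j.2.val)

/-- `Z̄(g)` for a bivariate polynomial. -/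
def nonzeros2 {L : Type} [CommRing L] [NeZero r₁] [NeZero r₂]
    (g : ZMod r₁ × ZMod r₂ → L) : Set (L × L) :=
  {p | p.1 ^ r₁ = 1 ∧ p.2 ^ r₂ = 1 ∧ eval2 g p.1 p.2 ≠ 0}

/-- Multiplication (convolution) in `L(r₁,r₂)`. -/
def conv2 {L : Type} [CommRing L] [NeZero r₁] [NeZero r₂]
    (u w : ZMod r₁ × ZMod r₂ → L) : ZMod r₁ × ZMod r₂ → L :=
  fun p => ∑ t : ZMod r₁ × ZMod r₂, u t * w (p.1 - t.1, p.2 - t.2)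

/-- The coefficient matrix of the product `a(X₁)·b(X₂)`. -/
def prodPoly {L : Type} [Mul L] (a : ZMod r₁ → L) (b : ZMod r₂ → L) :
    ZMod r₁ × ZMod r₂ → L :=
  fun p => a p.1 * b p.2

/-- `g(X₁,v)`: the coefficient vector in `X₁` of `g` with `X₂` evaluated at `v`. -/
def secEval {L : Type} [CommRing L] [NeZero r₂] (g : ZMod r₁ × ZMod r₂ → L) (v : L) :
    ZMod r₁ → L :=
  fun i => evalV (row g i) v

/-- `g(u,X₂)`: the coefficient vector in `X₂` of `g` with `X₁` evaluated at `u`. -/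
def fstEval {L : Type} [CommRing L] [NeZero r₁] (g : ZMod r₁ × ZMod r₂ → L) (u : L) :
    ZMod r₂ → L :=
  fun j => evalV (col g j) u

/-- Defining set of a bivariate abelian code. -/
def defSet2 {F L : Type} [Field F] [CommRing L] [Algebra F L] [NeZero r₁] [NeZero r₂]
    (α₁ α₂ : L) (C : Set (ZMod r₁ × ZMod r₂ → F)) : Set (ZMod r₁ × ZMod r₂) :=
  {j | ∀ c ∈ C, dft2 α₁ α₂ c j = 0}

/-- Multiplication by `X₁`. -/
def shiftX {R : Type} (v : ZMod r₁ × ZMod r₂ → R) : ZMod r₁ × ZMod r₂ → R :=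
  fun p => v (p.1 - 1, p.2)

/-- Multiplication by `X₂`. -/
def shiftY {R : Type} (v : ZMod r₁ × ZMod r₂ → R) : ZMod r₁ × ZMod r₂ → R :=
  fun p => v (p.1, p.2 - 1)

/-- A bivariate abelian code: an ideal of `F[X₁,X₂]/(X₁^{r₁}-1, X₂^{r₂}-1)`. -/
def IsAbelianCode2 {F : Type} [Field F] (C : Set (ZMod r₁ × ZMod r₂ → F)) : Prop :=
  (0 : ZMod r₁ × ZMod r₂ → F) ∈ C ∧ (∀ u ∈ C, ∀ v ∈ C, u + v ∈ C) ∧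
    (∀ (a : F), ∀ v ∈ C, a • v ∈ C) ∧ (∀ v ∈ C, shiftX v ∈ C) ∧ (∀ v ∈ C, shiftY v ∈ C)

/-- The abelian code (ideal) generated by `c₀`. -/
def codeGen2 {F : Type} [Field F] (c₀ : ZMod r₁ × ZMod r₂ → F) :
    Set (ZMod r₁ × ZMod r₂ → F) :=
  ⋂₀ {S | IsAbelianCode2 S ∧ c₀ ∈ S}

/-- `(B,ᾱ)`-apparent distance of a bivariate abelian code. -/
def DeltaCodeAt2 {L : Type} [Field L] [Algebra F L] [NeZero r₁] [NeZero r₂]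
    (B : Set (DSBound F)) (α₁ α₂ : L) (C : Set (ZMod r₁ × ZMod r₂ → F)) : ℕ :=
  sInf {m | ∃ c ∈ C, c ≠ 0 ∧ m = Delta2 B (dft2 α₁ α₂ c)}

/-- `B`-apparent distance of a bivariate abelian code. -/
def DeltaCode2 (L : Type) [Field L] [Algebra F L] [NeZero r₁] [NeZero r₂]
    (B : Set (DSBound F)) (C : Set (ZMod r₁ × ZMod r₂ → F)) : ℕ :=
  sSup {m | ∃ α₁ α₂ : L, IsPrimitiveRoot α₁ r₁ ∧ IsPrimitiveRoot α₂ r₂ ∧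
    m = DeltaCodeAt2 B α₁ α₂ C}

/-- BCH `ᾱ`-apparent distance of a bivariate abelian code. -/
def bchDeltaCodeAt2 {L : Type} [Field L] [Algebra F L] [NeZero r₁] [NeZero r₂]
    (α₁ α₂ : L) (C : Set (ZMod r₁ × ZMod r₂ → F)) : ℕ :=
  sInf {m | ∃ c ∈ C, c ≠ 0 ∧ m = bchDelta (dft2 α₁ α₂ c)}

/-- BCH apparent distance of a bivariate abelian code. -/
def bchDeltaCode2 (L : Type) [Field L] [Algebra F L] [NeZero r₁] [NeZero r₂]
    (C : Set (ZMod r₁ × ZMod r₂ → F)) : ℕ :=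
  sSup {m | ∃ α₁ α₂ : L, IsPrimitiveRoot α₁ r₁ ∧ IsPrimitiveRoot α₂ r₂ ∧
    m = bchDeltaCodeAt2 α₁ α₂ C}

/-! ### q-orbits in two variables -/

def qOrbit2 (q : ℕ) (a : ZMod r₁ × ZMod r₂) : Set (ZMod r₁ × ZMod r₂) :=
  {x | ∃ t : ℕ, x = ((q : ZMod r₁) ^ t * a.1, (q : ZMod r₂) ^ t * a.2)}

def IsUnionOfQOrbits2 (q : ℕ) (D : Set (ZMod r₁ × ZMod r₂)) : Prop :=
  ∀ a ∈ D, qOrbit2 q a ⊆ D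

/-- The matrix afforded by `D`. -/
def afforded2 {L : Type} [Zero L] [One L] (D : Set (ZMod r₁ × ZMod r₂)) :
    ZMod r₁ × ZMod r₂ → L :=
  fun p => if p ∈ D then 0 else 1

/-- Minimum `B`-apparent distance `B-mad(M)` of a matrix. -/
def Bmad2 {L : Type} [Zero L] (B : Set (DSBound F)) (q : ℕ)
    (M : ZMod r₁ × ZMod r₂ → L) : ℕ :=
  sInf {m | ∃ P : ZMod r₁ × ZMod r₂ → L, P ≠ 0 ∧ IsUnionOfQOrbits2 q {p | P p ≠ 0} ∧
    {p | P p ≠ 0} ⊆ {p | M p ≠ 0} ∧ m = Delta2 B P}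

/-- Minimum BCH apparent distance of a matrix. -/
def bchBmad2 {L : Type} [Zero L] (q : ℕ) (M : ZMod r₁ × ZMod r₂ → L) : ℕ :=
  sInf {m | ∃ P : ZMod r₁ × ZMod r₂ → L, P ≠ 0 ∧ IsUnionOfQOrbits2 q {p | P p ≠ 0} ∧
    {p | P p ≠ 0} ⊆ {p | M p ≠ 0} ∧ m = bchDelta P}

/-! ### BCH codes -/

/-- The `q`-cyclotomic coset of `b` modulo `n`. -/
def cycCoset (q : ℕ) {n : ℕ} (b : ZMod n) : Set (ZMod n) :=
  {x | ∃ t : ℕ, x = (q : ZMod n) ^ t * b}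

/-- The defining set `∪_{l=0}^{δ-2} C_q(b+l)` of the BCH code `B_q(α,δ,b)`. -/
def bchDefSet (q : ℕ) {n : ℕ} (δ : ℕ) (b : ZMod n) : Set (ZMod n) :=
  ⋃ l ∈ Finset.range (δ - 1), cycCoset q (b + (l : ZMod n))

/-- `C` is a BCH cyclic code (in the classical sense) with respect to `α`. -/
def IsBCHCyclicCode {F L : Type} [Field F] [Fintype F] [CommRing L] [Algebra F L]
    {n : ℕ} [NeZero n] (α : L) (C : Set (ZMod n → F)) : Prop :=
  ∃ (δ : ℕ) (b : ZMod n), 2 ≤ δ ∧ δ ≤ n ∧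
    DS.defSet1 α C = bchDefSet (Fintype.card F) δ b

/-- The defining set of a bivariate BCH code with parameters `γ, δ₁, δ₂, b₁, b₂`. -/
def bivarBCHDefSet (q : ℕ) (γ : Set (Fin 2)) (δ₁ δ₂ : ℕ) (b₁ : ZMod r₁) (b₂ : ZMod r₂) :
    Set (ZMod r₁ × ZMod r₂) :=
  {p | 0 ∈ γ ∧ ∃ l ∈ Finset.range (δ₁ - 1), ∃ a : ZMod r₁ × ZMod r₂,
      a.1 = b₁ + (l : ZMod r₁) ∧ p ∈ qOrbit2 q a} ∪
  {p | 1 ∈ γ ∧ ∃ l ∈ Finset.range (δ₂ - 1), ∃ a : ZMod r₁ × ZMod r₂,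
      a.2 = b₂ + (l : ZMod r₂) ∧ p ∈ qOrbit2 q a}

/-- `C` is a bivariate BCH code with respect to `(α₁,α₂)`. -/
def IsBivarBCH {F L : Type} [Field F] [Fintype F] [CommRing L] [Algebra F L]
    [NeZero r₁] [NeZero r₂] (α₁ α₂ : L) (C : Set (ZMod r₁ × ZMod r₂ → F)) : Prop :=
  ∃ (γ : Set (Fin 2)) (δ₁ δ₂ : ℕ) (b₁ : ZMod r₁) (b₂ : ZMod r₂),
    (0 ∈ γ → 2 ≤ δ₁ ∧ δ₁ ≤ r₁) ∧ (1 ∈ γ → 2 ≤ δ₂ ∧ δ₂ ≤ r₂) ∧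
    defSet2 α₁ α₂ C = bivarBCHDefSet (Fintype.card F) γ δ₁ δ₂ b₁ b₂

/-- Permutation equivalence of codes (permutation of the coordinate positions). -/
def PermEquiv {F : Type} [Field F] (C C' : Set (ZMod r₁ × ZMod r₂ → F)) : Prop :=
  ∃ σ : Equiv.Perm (ZMod r₁ × ZMod r₂), C' = (fun c => c ∘ σ) '' C

end DS2

end

open DS

namespace DS

section Transform

variable {F L : Type} [Field F] [Field L] [Algebra F L] {n : ℕ} [NeZero n]

lemma pow_val_add {β : L} (hβ : β ^ n = 1) (i j : ZMod n) :
    β ^ (i + j).val = β ^ i.val * β ^ j.val := by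
  rw [ZMod.val_add, ← pow_add, ← pow_eq_pow_mod _ hβ]

lemma evalVF_conv1 {β : L} (hβ : β ^ n = 1) (u v : ZMod n → F) :
    evalVF (conv1 u v) β = evalVF u β * evalVF v β := by
  unfold evalVF conv1
  simp only [map_sum, map_mul, Finset.sum_mul]
  rw [Finset.sum_comm]
  refine Finset.sum_congr rfl fun j _ => ?_
  rw [Finset.mul_sum]
  refine Fintype.sum_equiv (Equiv.subRight j) _ _ fun i => ?_
  have h := pow_val_add hβ j (i - j)
  rw [add_sub_cancel] at h
  rw [h, Equiv.subRight_apply]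
  ring

lemma evalVF_shiftOne {β : L} (hβ : β ^ n = 1) (v : ZMod n → F) :
    evalVF (shiftOne v) β = β ^ (1 : ZMod n).val * evalVF v β := by
  unfold evalVF shiftOne
  rw [Finset.mul_sum]
  refine Fintype.sum_equiv (Equiv.subRight 1) _ _ fun i => ?_
  have h := pow_val_add hβ 1 (i - 1)
  rw [add_sub_cancel] at h
  rw [h, Equiv.subRight_apply]
  ring

lemma pow_pow_eq_one {L : Type} [Field L] {n : ℕ} {α : L} (hα : IsPrimitiveRoot α n) (k : ℕ) : (α ^ k) ^ n = 1 := by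
  rw [← pow_mul, mul_comm, pow_mul, hα.pow_eq_one, one_pow]

lemma dft1_conv1 {α : L} (hα : IsPrimitiveRoot α n) (u v : ZMod n → F) (j : ZMod n) :
    dft1 α (conv1 u v) j = dft1 α u j * dft1 α v j :=
  evalVF_conv1 (pow_pow_eq_one hα _) u v

/-- Injectivity of the transform: a polynomial of degree less than `n` vanishing at the `n`
distinct powers of `α` is zero. -/
lemma eq_zero_of_dft1_eq_zero {α : L} (hα : IsPrimitiveRoot α n) {c : ZMod n → F}
    (h : dft1 α c = 0) : c = 0 := by
  set p : L[X] := toPoly fun i => algebraMap F L (c i) with hp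
  have hinj : Function.Injective fun j : ZMod n => α ^ j.val := fun i j hij =>
    ZMod.val_injective n (hα.pow_inj (ZMod.val_lt i) (ZMod.val_lt j) hij)
  have hdeg : p.degree < n := by
    rw [← Polynomial.mem_degreeLT]
    refine Submodule.sum_mem _ fun i _ => Polynomial.mem_degreeLT.2 ?_
    exact (Polynomial.degree_C_mul_X_pow_le _ _).trans_lt (by exact_mod_cast ZMod.val_lt i)
  have hp0 : p = 0 := by
    refine Polynomial.eq_zero_of_degree_lt_of_eval_index_eq_zero (s := Finset.univ)
      (v := fun j : ZMod n => α ^ j.val) hinj.injOn (by simpa [ZMod.card] using hdeg) fun j _ => ?_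
    have := congrFun h j
    simpa [hp, toPoly, dft1, evalVF, Polynomial.eval_finsetSum] using this
  funext i
  have hc : p.coeff i.val = algebraMap F L (c i) := by
    rw [hp, toPoly, Polynomial.finsetSum_coeff, Finset.sum_eq_single i]
    · simp
    · intro j _ hj
      rw [Polynomial.coeff_C_mul_X_pow, if_neg fun h => hj (ZMod.val_injective n h.symm)]
    · simp
  rw [hp0, Polynomial.coeff_zero] at hc
  simpa using hc.symm

end Transform

/-- Transport of `α` to the algebraic closure of `F`, along an embedding of `F(α)`, without
changing the zeros of the transforms of words over `F`. -/
lemma exists_root_algebraicClosure {F L : Type} [Field F] [Field L] [Algebra F L] {n : ℕ}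
    [NeZero n] {α : L} (hα : IsPrimitiveRoot α n) :
    ∃ α' : AlgebraicClosure F, IsPrimitiveRoot α' n ∧
      ∀ (c : ZMod n → F) (j : ZMod n), dft1 α' c j = 0 ↔ dft1 α c j = 0 := by
  have hαint : IsIntegral F α := hα.isIntegral (NeZero.pos n) |>.tower_top
  have : Algebra.IsAlgebraic F (IntermediateField.adjoin F {α}) :=
    IntermediateField.isAlgebraic_adjoin_simple hαint
  let f : IntermediateField.adjoin F {α} →ₐ[F] AlgebraicClosure F := IsAlgClosed.lift
  let a : IntermediateField.adjoin F {α} := IntermediateField.AdjoinSimple.gen F α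
  have ha : ((IntermediateField.adjoin F {α}).val) a = α :=
    IntermediateField.AdjoinSimple.coe_gen F α
  have hmap : ∀ {K : Type} [Field K] [Algebra F K] (φ : IntermediateField.adjoin F {α} →ₐ[F] K)
      (c : ZMod n → F) (j : ZMod n), dft1 (φ a) c j = φ (dft1 a c j) := by
    intro K _ _ φ c j
    simp [dft1, evalVF]
  have ha' : IsPrimitiveRoot a n :=
    IsPrimitiveRoot.of_map_of_injective (f := (IntermediateField.adjoin F {α}).val)
      (by rw [ha]; exact hα) (IntermediateField.adjoin F {α}).val.injective
  refine ⟨f a, ha'.map_of_injective f.injective, fun c j => ?_⟩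
  have h2 := hmap (IntermediateField.adjoin F {α}).val c j
  rw [ha] at h2
  rw [hmap f, h2, map_eq_zero, map_eq_zero]

section Bounds

variable {F : Type} [Field F] [Fintype F] {L : Type} [Field L] [Algebra F L] {n : ℕ} [NeZero n]

lemma optB_le_wt (δ : DSBound F) {α : L} (hα : IsPrimitiveRoot α n) {c : ZMod n → F}
    (hc : c ≠ 0) : optB δ n {i | dft1 α c i ≠ 0}ᶜ ≤ wt c := by
  obtain ⟨α', hα', hzero⟩ := exists_root_algebraicClosure (F := F) hα
  let D : Set (ZMod n → F) := {x | ∀ j, dft1 α' c j = 0 → dft1 α' x j = 0}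
  have hD : IsCyclicCode D := by
    refine ⟨fun j _ => by simp [dft1, evalVF], fun u hu v hv j hj => ?_,
      fun a v hv j hj => ?_, fun v hv j hj => ?_⟩
    · have : dft1 α' (u + v) j = dft1 α' u j + dft1 α' v j := by
        simp [dft1, evalVF, add_mul, Finset.sum_add_distrib]
      rw [this, hu j hj, hv j hj, add_zero]
    · have : dft1 α' (a • v) j = algebraMap F _ a * dft1 α' v j := by
        simp [dft1, evalVF, Finset.mul_sum, mul_assoc]
      rw [this, hv j hj, mul_zero]
    · have := evalVF_shiftOne (pow_pow_eq_one hα' j.val) v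
      have h0 : evalVF v (α' ^ j.val) = 0 := hv j hj
      rw [h0, mul_zero] at this
      exact this
  have hcD : c ∈ D := fun _ h => h
  have hD0 : D ≠ {0} := fun h => hc (by rw [h] at hcD; exact hcD)
  have hsub : {i | dft1 α c i ≠ 0}ᶜ ⊆ defSet1 α' D := by
    intro i hi v hv
    exact hv i ((hzero c i).2 (by simpa using hi))
  refine csSup_le ⟨1, δ.one' n _⟩ fun b hb => ?_
  exact (δ.bound n D hD hD0 α' hα' _ b hsub hb).2.trans (Nat.sInf_le ⟨c, ⟨hcD, hc⟩, rfl⟩)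

lemma optB_mono {F : Type} [Field F] [Fintype F] {n : ℕ} (δ : DSBound F) {N M : Set (ZMod n)} (h : N ⊆ M) : optB δ n N ≤ optB δ n M :=
  csSup_le_csSup (δ.bdd n M) ⟨1, δ.one' n N⟩ fun b hb => δ.mono n N M h b hb

lemma dft1_ne_zero {α : L} (hα : IsPrimitiveRoot α n) {c : ZMod n → F} (hc : c ≠ 0) :
    dft1 α c ≠ 0 := fun h => hc (eq_zero_of_dft1_eq_zero hα h)

lemma DeltaV_le_wt (B : Set (DSBound F)) {α : L} (hα : IsPrimitiveRoot α n) {c : ZMod n → F}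
    (hc : c ≠ 0) : DeltaV B (dft1 α c) ≤ wt c := by
  rw [DeltaV, if_neg (dft1_ne_zero hα hc)]
  refine csSup_le' ?_
  rintro _ ⟨δ, _, rfl⟩
  exact optB_le_wt δ hα hc

/-- `Δ` does not decrease when passing from `g` to a nonzero multiple of `g`. -/
lemma DeltaV_mono (B : Set (DSBound F)) {α : L} (hα : IsPrimitiveRoot α n)
    {g u : ZMod n → F} (hc : conv1 u g ≠ 0) :
    DeltaV B (dft1 α g) ≤ DeltaV B (dft1 α (conv1 u g)) := by
  have hg : g ≠ 0 := by
    rintro rfl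
    exact hc (funext fun i => by simp [conv1])
  rw [DeltaV, DeltaV, if_neg (dft1_ne_zero hα hc), if_neg (dft1_ne_zero hα hg)]
  refine csSup_le' ?_
  rintro _ ⟨δ, hδ, rfl⟩
  have hsub : {i | dft1 α g i ≠ 0}ᶜ ⊆ {i | dft1 α (conv1 u g) i ≠ 0}ᶜ := by
    intro i hi
    have hi' : dft1 α g i = 0 := by simpa using hi
    simp [dft1_conv1 hα, hi']
  refine (optB_mono δ hsub).trans (le_csSup ⟨wt (conv1 u g), ?_⟩ ⟨δ, hδ, rfl⟩)
  rintro _ ⟨δ', _, rfl⟩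
  exact optB_le_wt δ' hα hc

end Bounds

end DS

/-- Apparent distance of a cyclic code computed on its generating
polynomial and its idempotent generator. -/
theorem stmt_2 {F : Type} [Field F] [Fintype F] {L : Type} [Field L] [Algebra F L]
    (n : ℕ) [NeZero n] (hn : Nat.Coprime n (Fintype.card F))
    (B : Set (DSBound F)) (α : L) (hα : IsPrimitiveRoot α n)
    (C : Set (ZMod n → F)) (hC : IsCyclicCode C) (hC0 : C ≠ {0})
    (g : ZMod n → F) (hgC : g ∈ C)
    (hgdvd : toPoly g ∣ (Polynomial.X ^ n - 1 : Polynomial F))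
    (hgGen : ∀ c ∈ C, ∃ u : ZMod n → F, c = conv1 u g)
    (e : ZMod n → F) (heC : e ∈ C) (heIdem : conv1 e e = e)
    (heGen : ∀ c ∈ C, ∃ u : ZMod n → F, c = conv1 u e) :
    (DeltaV B (dft1 α g) = DeltaV B (dft1 α e) ∧
      ∀ c ∈ C, c ≠ 0 → DeltaV B (dft1 α g) ≤ DeltaV B (dft1 α c)) ∧
    (∀ c ∈ C, c ≠ 0 → DeltaV B (dft1 α c) ≤ wt c) ∧
    (DeltaV B (dft1 α g) = DeltaCodeAt1 B α C ∧ DeltaCodeAt1 B α C ≤ minDist C) := by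
  obtain ⟨c₀, hc₀C, hc₀⟩ : ∃ c ∈ C, c ≠ 0 := by
    by_contra! h
    exact hC0 (Set.eq_singleton_iff_unique_mem.2 ⟨hC.1, h⟩)
  have hne : ∀ g' : ZMod n → F, (∀ c ∈ C, ∃ u : ZMod n → F, c = conv1 u g') → g' ≠ 0 := by
    rintro g' hg' rfl
    obtain ⟨u, hu⟩ := hg' c₀ hc₀C
    exact hc₀ (hu.trans (funext fun i => by simp [conv1]))
  have hmin : ∀ g' : ZMod n → F, (∀ c ∈ C, ∃ u : ZMod n → F, c = conv1 u g') →
      ∀ c ∈ C, c ≠ 0 → DeltaV B (dft1 α g') ≤ DeltaV B (dft1 α c) := by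
    intro g' hg' c hcC hc
    obtain ⟨u, rfl⟩ := hg' c hcC
    exact DeltaV_mono B hα hc
  have hg := hne g hgGen
  have hcode : DeltaV B (dft1 α g) = DeltaCodeAt1 B α C := by
    refine le_antisymm (le_csInf ⟨_, g, hgC, hg, rfl⟩ ?_) (Nat.sInf_le ⟨g, hgC, hg, rfl⟩)
    rintro _ ⟨c, hcC, hc, rfl⟩
    exact hmin g hgGen c hcC hc
  refine ⟨⟨le_antisymm (hmin g hgGen e heC (hne e heGen)) (hmin e heGen g hgC hg),
    hmin g hgGen⟩, fun c _ hc => DeltaV_le_wt B hα hc, hcode, ?_⟩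
  rw [← hcode]
  refine le_csInf ⟨_, g, ⟨hgC, hg⟩, rfl⟩ ?_
  rintro _ ⟨c, ⟨hcC, hc⟩, rfl⟩
  exact (hmin g hgGen c hcC hc).trans (DeltaV_le_wt B hα hc)
end

section
/- Let C be a nonzero abelian code in 𝔽_q(r_1,…,r_s), 𝔹 a set of ds-bounds, and ᾱ ∈ U. Then Δ_{𝔹,ᾱ}(C) = min{Δ_𝔹(M(φ_{ᾱ,e})) : 0 ≠ e ∈ C, e² = e}; that is, the minimum of Δ_𝔹(M(φ_{ᾱ,c})) over nonzero codewords c ∈ C is attained on, and equals the minimum over, the nonzero idempotents of C. -/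
/-!
The apparent distance `DeltaH B s r M` depends only on the support of `M`
(`deltaH_congr`), so it suffices to find, for each nonzero `c ∈ C`, a nonzero idempotent of `C`
whose Fourier transform has the same support as that of `c`; the two sets of values whose infima
are compared then coincide.

Such an idempotent is a power of `c`. The transform is multiplicative (`mDFT_mConv`) and injective
(`mDFT_eq_zero`, by Dedekind's linear independence of characters), and the powers of `c` lie in a
finite set, so `c ^ a = c ^ b` for some `1 ≤ a < b`. Hence every value of the transform of `c` is
either `0` or a `(b - a)`-th root of unity, and the transform of `e = c ^ (b - a)` is the indicator
function of the support of the transform of `c`. By injectivity `e` is a nonzero idempotent, and it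
belongs to `C` because `C` is an ideal (`mConv_mem`).
-/

open scoped Classical
open Polynomial

open DS

/-! ### Dependence of the apparent distance on the support -/

/-- The apparent distance of a hypermatrix depends only on its support. -/
lemma deltaH_congr {F : Type} [Field F] [Fintype F] {L : Type} [Zero L] (B : Set (DSBound F)) :
    ∀ (s : ℕ) (r : Fin s → ℕ) (M N : (∀ i, ZMod (r i)) → L),
      (∀ x, M x = 0 ↔ N x = 0) → DeltaH B s r M = DeltaH B s r N := by
  intro s
  induction s with
  | zero =>
    intro r M N h
    have h0 : M = 0 ↔ N = 0 := by simp only [funext_iff, Pi.zero_apply, h]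
    simp only [DeltaH, h0]
  | succ s ih =>
    intro r M N h
    have h0 : M = 0 ↔ N = 0 := by simp only [funext_iff, Pi.zero_apply, h]
    have hcol : ∀ j k, hyperCol M j k = 0 ↔ hyperCol N j k = 0 := by
      intro j k
      simp only [funext_iff, Pi.zero_apply, hyperCol, h]
    have hD : ∀ (j : Fin (s + 1)) (k : ZMod (r j)),
        DeltaH B s (fun i => r (j.succAbove i)) (hyperCol M j k) =
          DeltaH B s (fun i => r (j.succAbove i)) (hyperCol N j k) :=
      fun j k => ih _ _ _ fun x => h _
    simp only [DeltaH, h0, ne_eq, hcol, hD]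

/-! ### The Fourier transform: injectivity and multiplicativity -/

lemma pow_zmod_val_add {L : Type} [CommRing L] {n : ℕ} [NeZero n] {β : L} (hβ : β ^ n = 1)
    (a b : ZMod n) : β ^ (a + b).val = β ^ a.val * β ^ b.val := by
  rw [ZMod.val_add, ← pow_add, ← pow_eq_pow_mod _ hβ]

section Transform

variable {L : Type} [Field L] {s : ℕ} {r : Fin s → ℕ}

/-- The kernel `∏ i, α i ^ (j i * k i)` of the Fourier transform. -/
def fourierKer (α : Fin s → L) (j k : ∀ i, ZMod (r i)) : L :=
  ∏ i, (α i ^ (j i).val) ^ (k i).val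

lemma fourierKer_comm (α : Fin s → L) (j k : ∀ i, ZMod (r i)) :
    fourierKer α j k = fourierKer α k j := by
  simp only [fourierKer, pow_right_comm]

lemma fourierKer_zero_right (α : Fin s → L) (j : ∀ i, ZMod (r i)) :
    fourierKer α j 0 = 1 := by
  simp [fourierKer]

variable [∀ i, NeZero (r i)]

lemma fourierKer_add_right {α : Fin s → L} (hα : ∀ i, IsPrimitiveRoot (α i) (r i))
    (j k l : ∀ i, ZMod (r i)) :
    fourierKer α j (k + l) = fourierKer α j k * fourierKer α j l := by
  simp only [fourierKer, ← Finset.prod_mul_distrib, Pi.add_apply]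
  refine Finset.prod_congr rfl fun i _ => pow_zmod_val_add ?_ _ _
  rw [pow_right_comm, (hα i).pow_eq_one, one_pow]

/-- The character `j ↦ fourierKer α k j` of the index group. -/
def fourierChar {α : Fin s → L} (hα : ∀ i, IsPrimitiveRoot (α i) (r i)) (k : ∀ i, ZMod (r i)) :
    Multiplicative (∀ i, ZMod (r i)) →* L where
  toFun j := fourierKer α k j.toAdd
  map_one' := fourierKer_zero_right α k
  map_mul' a b := fourierKer_add_right hα k a.toAdd b.toAdd

lemma fourierChar_injective {α : Fin s → L} (hα : ∀ i, IsPrimitiveRoot (α i) (r i)) :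
    Function.Injective (fourierChar hα) := by
  intro k l hkl
  funext t
  -- Evaluating at the `t`-th unit vector recovers `α t ^ k t`.
  have hsingle : ∀ m : ∀ i, ZMod (r i),
      fourierKer α m (Pi.single t 1) = α t ^ (m t).val := by
    intro m
    rw [fourierKer, Finset.prod_eq_single t]
    · by_cases h1 : r t = 1
      · have h : α t = 1 := by simpa [h1] using (hα t).pow_eq_one
        simp [h]
      · have : Fact (1 < r t) := ⟨by have := NeZero.ne (r t); omega⟩
        simp [ZMod.val_one]
    · intro i _ hi
      simp [Pi.single_eq_of_ne hi]
    · simp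
  have h := DFunLike.congr_fun hkl (Multiplicative.ofAdd (Pi.single t 1))
  change fourierKer α k (Pi.single t 1) = fourierKer α l (Pi.single t 1) at h
  rw [hsingle, hsingle] at h
  exact ZMod.val_injective _ ((hα t).pow_inj (ZMod.val_lt _) (ZMod.val_lt _) h)

variable {F : Type} [Field F] [Algebra F L]

lemma mDFT_eq_sum (α : Fin s → L) (c : (∀ i, ZMod (r i)) → F) (j : ∀ i, ZMod (r i)) :
    mDFT α c j = ∑ k, algebraMap F L (c k) * fourierKer α j k := rfl

/-- Injectivity of the transform, from linear independence of characters. -/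
lemma mDFT_eq_zero {α : Fin s → L} (hα : ∀ i, IsPrimitiveRoot (α i) (r i))
    {c : (∀ i, ZMod (r i)) → F} (h : mDFT α c = 0) : c = 0 := by
  have hli := (linearIndependent_monoidHom (Multiplicative (∀ i, ZMod (r i))) L).comp
    (fourierChar hα) (fourierChar_injective hα)
  rw [Fintype.linearIndependent_iff] at hli
  have key := hli (fun k => algebraMap F L (c k)) (by
    funext j
    have hj := congrFun h j.toAdd
    rw [mDFT_eq_sum] at hj
    simp only [Finset.sum_apply, Pi.smul_apply, Function.comp_apply, smul_eq_mul]
    exact (Finset.sum_congr rfl fun k _ => by rw [fourierKer_comm]; rfl).trans hj)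
  funext k
  simpa using key k

lemma mDFT_injective {α : Fin s → L} (hα : ∀ i, IsPrimitiveRoot (α i) (r i))
    {c d : (∀ i, ZMod (r i)) → F} (h : mDFT α c = mDFT α d) : c = d := by
  rw [← sub_eq_zero]
  apply mDFT_eq_zero hα
  funext j
  have hj := congrFun h j
  simp only [mDFT_eq_sum] at hj ⊢
  simp [sub_mul, Finset.sum_sub_distrib, hj]

lemma mDFT_mConv {α : Fin s → L} (hα : ∀ i, IsPrimitiveRoot (α i) (r i))
    (c d : (∀ i, ZMod (r i)) → F) (j : ∀ i, ZMod (r i)) :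
    mDFT α (mConv c d) j = mDFT α c j * mDFT α d j := by
  simp only [mDFT_eq_sum, mConv, map_sum, map_mul, Finset.sum_mul]
  rw [Finset.sum_comm]
  refine Finset.sum_congr rfl fun k _ => ?_
  rw [Finset.mul_sum, ← Equiv.sum_comp (Equiv.addRight k)]
  refine Finset.sum_congr rfl fun l _ => ?_
  have hl : (fun i => (Equiv.addRight k) l i - k i) = l := by
    funext i
    simp
  rw [hl, Equiv.coe_addRight, fourierKer_add_right hα]
  ring

end Transform

/-! ### Abelian codes as ideals and idempotent powers -/

section Ideal

variable {F : Type} [Field F] {s : ℕ} {r : Fin s → ℕ} [∀ i, NeZero (r i)]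
  {C : Set ((∀ i, ZMod (r i)) → F)}

/-- An abelian code is closed under multiplication by every monomial `X ^ k`. -/
lemma translate_mem (hC : IsAbelianCode C) (k : ∀ i, ZMod (r i)) :
    ∀ v ∈ C, (fun j => v (j - k)) ∈ C := by
  let S : AddSubmonoid (∀ i, ZMod (r i)) :=
    { carrier := {k | ∀ v ∈ C, (fun j => v (j - k)) ∈ C}
      zero_mem' := by
        intro v hv
        simpa using hv
      add_mem' := by
        intro a b ha hb v hv
        have := hb _ (ha v hv)
        simpa only [sub_sub, add_comm a b] using this }
  have hsingle : ∀ t, (Pi.single t 1 : ∀ i, ZMod (r i)) ∈ S := by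
    intro t v hv
    have h := hC.2.2.2 t v hv
    have he : mShift t v = fun j => v (j - Pi.single t 1) := by
      funext j
      unfold mShift
      congr 1
      funext i
      by_cases hi : i = t
      · subst hi
        simp
      · simp [hi]
    rwa [he] at h
  have hk : k = ∑ t, (k t).val • (Pi.single t 1 : ∀ i, ZMod (r i)) := by
    conv_lhs => rw [← Finset.univ_sum_single k]
    refine Finset.sum_congr rfl fun t _ => ?_
    rw [← Pi.single_smul]
    simp
  have : k ∈ S := by
    rw [hk]
    exact S.sum_mem fun t _ => S.nsmul_mem (hsingle t) _
  exact this

lemma mConv_mem (hC : IsAbelianCode C) (c : (∀ i, ZMod (r i)) → F)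
    {v : (∀ i, ZMod (r i)) → F} (hv : v ∈ C) : mConv c v ∈ C := by
  have he : mConv c v = ∑ k, c k • (fun j => v (j - k)) := by
    funext j
    simp only [mConv, Finset.sum_apply, Pi.smul_apply, smul_eq_mul]
    rfl
  rw [he]
  exact Finset.sum_induction _ (· ∈ C) (fun a b ha hb => hC.2.1 a ha b hb) hC.1
    fun k _ => hC.2.2.1 _ _ (translate_mem hC k v hv)

/-- `convPow c n` is the `(n + 1)`-st power of `c` for the convolution product. -/
def convPow (c : (∀ i, ZMod (r i)) → F) : ℕ → (∀ i, ZMod (r i)) → F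
  | 0 => c
  | n + 1 => mConv c (convPow c n)

lemma convPow_mem (hC : IsAbelianCode C) {c : (∀ i, ZMod (r i)) → F} (hc : c ∈ C) (n : ℕ) :
    convPow c n ∈ C := by
  induction n with
  | zero => exact hc
  | succ n ih => exact mConv_mem hC c ih

lemma mDFT_convPow {L : Type} [Field L] [Algebra F L] {α : Fin s → L}
    (hα : ∀ i, IsPrimitiveRoot (α i) (r i)) (c : (∀ i, ZMod (r i)) → F) (n : ℕ)
    (j : ∀ i, ZMod (r i)) : mDFT α (convPow c n) j = mDFT α c j ^ (n + 1) := by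
  induction n with
  | zero => simp [convPow]
  | succ n ih => rw [convPow, mDFT_mConv hα, ih, ← pow_succ']

/-- Some power of a codeword `c ∈ C` is an idempotent of `C` whose transform has
the same support as that of `c`. -/
lemma exists_idempotent [Fintype F] {L : Type} [Field L] [Algebra F L] {α : Fin s → L}
    (hα : ∀ i, IsPrimitiveRoot (α i) (r i)) (hC : IsAbelianCode C)
    {c : (∀ i, ZMod (r i)) → F} (hc : c ∈ C) :
    ∃ e ∈ C, mConv e e = e ∧ ∀ j, mDFT α e j = 0 ↔ mDFT α c j = 0 := by
  obtain ⟨a, b, hab, heq⟩ := Set.finite_univ.exists_lt_map_eq_of_forall_mem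
    (f := convPow c) fun _ => Set.mem_univ _
  obtain ⟨m, rfl⟩ := Nat.exists_eq_add_of_lt hab
  have hpow : ∀ j, mDFT α c j = 0 ∨ mDFT α c j ^ (m + 1) = 1 := by
    intro j
    by_cases h0 : mDFT α c j = 0
    · exact Or.inl h0
    · right
      have h := congrFun (congrArg (mDFT α) heq) j
      rw [mDFT_convPow hα, mDFT_convPow hα, show a + m + 1 + 1 = (a + 1) + (m + 1) by ring,
        pow_add _ (a + 1) (m + 1)] at h
      exact (mul_eq_left₀ (pow_ne_zero _ h0)).mp h.symm
  refine ⟨convPow c m, convPow_mem hC hc m, mDFT_injective hα ?_, fun j => ?_⟩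
  · funext j
    rw [mDFT_mConv hα, mDFT_convPow hα]
    rcases hpow j with h | h <;> simp [h]
  · rw [mDFT_convPow hα]
    simp

end Ideal

/-- The `(𝔹,ᾱ)`-apparent distance of an abelian code is attained on,
and equals the minimum over, its nonzero idempotents. -/
theorem stmt_5 {F : Type} [Field F] [Fintype F] {L : Type} [Field L] [Algebra F L]
    (s : ℕ) (r : Fin s → ℕ) [∀ i, NeZero (r i)]
    (hr : ∀ i, Nat.Coprime (r i) (Fintype.card F))
    (B : Set (DSBound F))
    (C : Set ((∀ i, ZMod (r i)) → F)) (hC : IsAbelianCode C) (hC0 : C ≠ {0})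
    (α : Fin s → L) (hα : ∀ i, IsPrimitiveRoot (α i) (r i)) :
    DeltaCodeAt B α C =
      sInf {m | ∃ e ∈ C, e ≠ 0 ∧ mConv e e = e ∧ m = DeltaH B s r (mDFT α e)} := by
  unfold DeltaCodeAt
  congr 1
  ext m
  constructor
  · rintro ⟨c, hc, hc0, rfl⟩
    obtain ⟨e, he, hee, hsupp⟩ := exists_idempotent hα hC hc
    refine ⟨e, he, ?_, hee, deltaH_congr B s r _ _ fun x => (hsupp x).symm⟩
    rintro rfl
    refine hc0 (mDFT_eq_zero hα (funext fun j => (hsupp j).mp ?_))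
    simp [mDFT_eq_sum]
  · rintro ⟨e, he, he0, -, rfl⟩
    exact ⟨e, he, he0, rfl⟩
end
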